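/- For n = 1 and λ = 1/2, the operator L^{(1)} = −(1/16)·(ξ_1∘D − 2E'∘(∂/∂u_1))∘D factors as L^{(1)} = (1/16)·(E' + 1/2)∘(∂³/(∂u_1² ∂ξ_1)); equivalently, for all ψ ∈ A = ℂ[u_1, ξ_1], E'(E'+1)(C^{1/2}_2(ξ_1, ψ)) = (1/16)·(E' + 1/2)(∂³ψ/(∂u_1² ∂ξ_1)). -/

import Mathlib

open MvPolynomial

/-- The polynomial symbol algebra `A = ℂ[u₁,…,uₙ,ξ₁,…,ξₙ]`: variables `Sum.inl i` are the
`uᵢ` and variables `Sum.inr i` are the `ξᵢ`. -/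
abbrev PolA (n : ℕ) := MvPolynomial (Fin n ⊕ Fin n) ℂ

namespace LO

/-- ξ-degree of a monomial exponent. -/
def xiDeg {n : ℕ} (d : (Fin n ⊕ Fin n) →₀ ℕ) : ℕ :=
  ∑ i : Fin n, d (Sum.inr i)

/-- `c(E)`: the operator multiplying the ξ-degree-`m` component by `c m`. -/
noncomputable def cE {n : ℕ} (c : ℕ → ℂ) (φ : PolA n) : PolA n :=
  ∑ d ∈ φ.support, monomial d (c (xiDeg d) * coeff d φ)

/-- `D = Σᵢ ∂²/∂uᵢ∂ξᵢ`. -/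
noncomputable def Dop {n : ℕ} (φ : PolA n) : PolA n :=
  ∑ i : Fin n, pderiv (Sum.inl i) (pderiv (Sum.inr i) φ)

/-- The scalar `h^λ_d(m)`. -/
noncomputable def hScal (n : ℕ) (lam : ℂ) (d m : ℕ) : ℂ :=
  (d.factorial : ℂ)⁻¹ *
    ∏ j ∈ Finset.range d,
      ((m : ℂ) + (j : ℂ) + lam * ((n : ℂ) + 1)) /
        (2 * (m : ℂ) + (j : ℂ) + (n : ℂ) + (d : ℂ))

/-- The scalar `g^λ_d(m)`. -/
noncomputable def gScal (n : ℕ) (lam : ℂ) (d m : ℕ) : ℂ :=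
  (d.factorial : ℂ)⁻¹ *
    ∏ j ∈ Finset.range d,
      (-(m : ℂ) - (j : ℂ) - lam * ((n : ℂ) + 1)) /
        (2 * (m : ℂ) + (j : ℂ) + (n : ℂ) + 1)

/-- `bh^λ_d = h^λ_d(E) ∘ D^d` (equal to the identity for `d = 0`). -/
noncomputable def bh {n : ℕ} (lam : ℂ) (d : ℕ) (φ : PolA n) : PolA n :=
  cE (hScal n lam d) (Dop^[d] φ)

/-- `bg^λ_d = g^λ_d(E) ∘ D^d` (equal to the identity for `d = 0`). -/
noncomputable def bg {n : ℕ} (lam : ℂ) (d : ℕ) (φ : PolA n) : PolA n :=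
  cE (gScal n lam d) (Dop^[d] φ)

/-- `N_k(φ,ψ) = (1/k!) Σ_{α ∈ {1,…,n}^k} ∂^kφ/∂ξ_α · ∂^kψ/∂u_α`. -/
noncomputable def Nop {n : ℕ} (k : ℕ) (φ ψ : PolA n) : PolA n :=
  (k.factorial : ℂ)⁻¹ •
    ∑ α : Fin k → Fin n,
      ((List.ofFn α).foldr (fun i acc => pderiv (Sum.inr i) acc) φ) *
      ((List.ofFn α).foldr (fun i acc => pderiv (Sum.inl i) acc) ψ)

/-- The coefficient `C^λ_p` of the Lecomte–Ovsienko star product. -/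
noncomputable def C (n : ℕ) (lam : ℂ) (p : ℕ) (φ ψ : PolA n) : PolA n :=
  ∑ i ∈ Finset.range (p + 1), ∑ j ∈ Finset.range (p + 1),
    ∑ k ∈ Finset.range (p + 1), ∑ m ∈ Finset.range (p + 1),
      if i + j + k + m = p then bg lam m (Nop k (bh lam i φ) (bh lam j ψ)) else 0

/-- The Poisson bracket `{φ,ψ}`. -/
noncomputable def pb {n : ℕ} (φ ψ : PolA n) : PolA n :=
  ∑ i : Fin n,
    (pderiv (Sum.inr i) φ * pderiv (Sum.inl i) ψ
      - pderiv (Sum.inl i) φ * pderiv (Sum.inr i) ψ)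

/-- `φ ∈ A^m` (ξ-homogeneous of degree `m`; for `m < 0` this forces `φ = 0`). -/
def IsXiHomog {n : ℕ} (m : ℤ) (φ : PolA n) : Prop :=
  ∀ d ∈ φ.support, (xiDeg d : ℤ) = m

/-- The set of spanning momentum functions of the projective `sl_{n+1}(ℝ)`-action. -/
noncomputable def momSet (n : ℕ) : Set (PolA n) :=
  (Set.range fun i : Fin n => (X (Sum.inr i) : PolA n)) ∪
  (Set.range fun ij : Fin n × Fin n =>
    (X (Sum.inl ij.1) * X (Sum.inr ij.2) : PolA n)) ∪
  (Set.range fun i : Fin n =>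
    (X (Sum.inl i) * ∑ k : Fin n, X (Sum.inl k) * X (Sum.inr k) : PolA n))

/-- The span `M` of the momentum functions. -/
noncomputable def momSpan (n : ℕ) : Submodule ℂ (PolA n) := Submodule.span ℂ (momSet n)

/-- The Weyl algebra `W` of differential operators with polynomial coefficients,
as a subalgebra of `End_ℂ(A)`. -/
noncomputable def Weyl (n : ℕ) : Subalgebra ℂ (Module.End ℂ (PolA n)) :=
  Algebra.adjoin ℂ
    ((Set.range fun i : Fin n =>
        (LinearMap.mulLeft ℂ (X (Sum.inl i)) : Module.End ℂ (PolA n))) ∪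
     (Set.range fun i : Fin n =>
        (LinearMap.mulLeft ℂ (X (Sum.inr i)) : Module.End ℂ (PolA n))) ∪
     (Set.range fun v : Fin n ⊕ Fin n =>
        ((pderiv v).toLinearMap : Module.End ℂ (PolA n))))

/-- A bilinear map `B : A × A → A` is bidifferential if it is a finite sum
`B(φ,ψ) = Σ_α A_α(φ)·B_α(ψ)` with `A_α, B_α` in the Weyl algebra. -/
def Bidiff (n : ℕ) (B : PolA n → PolA n → PolA n) : Prop :=
  ∃ (N : ℕ) (Aop Bop : Fin N → Weyl n),
    ∀ φ ψ : PolA n,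
      B φ ψ = ∑ α : Fin N,
        (Aop α : Module.End ℂ (PolA n)) φ * (Bop α : Module.End ℂ (PolA n)) ψ

/-- The scalar by which `T_p = ∏_{i=1}^{⌊p/2⌋}(E'+i)` acts on `A^m`. -/
noncomputable def TScal (n p m : ℕ) : ℂ :=
  ∏ i ∈ Finset.Icc 1 (p / 2), ((m : ℂ) + (n : ℂ) / 2 + (i : ℂ))

/-- The scalar by which `S_p = ∏_{i=1}^{⌊p/2⌋}(E'−i)` acts on `A^m`. -/
noncomputable def SScal (n p m : ℕ) : ℂ :=
  ∏ i ∈ Finset.Icc 1 (p / 2), ((m : ℂ) + (n : ℂ) / 2 - (i : ℂ))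

/-- The operator `T_p`. -/
noncomputable def Tp (n p : ℕ) : PolA n → PolA n := cE (TScal n p)

/-- The operator `S_p`. -/
noncomputable def Sp (n p : ℕ) : PolA n → PolA n := cE (SScal n p)

/-- The fiberwise Euler operator `E = Σ ξᵢ ∂/∂ξᵢ` as an endomorphism. -/
noncomputable def Elin (n : ℕ) : Module.End ℂ (PolA n) :=
  ∑ i : Fin n,
    (LinearMap.mulLeft ℂ (X (Sum.inr i)) : Module.End ℂ (PolA n)) ∘ₗ
      (pderiv (Sum.inr i)).toLinearMap

/-- `E' = E + n/2` as an endomorphism. -/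
noncomputable def E'lin (n : ℕ) : Module.End ℂ (PolA n) :=
  Elin n + ((n : ℂ) / 2) • 1

/-- `D` as an endomorphism. -/
noncomputable def Dlin (n : ℕ) : Module.End ℂ (PolA n) :=
  ∑ i : Fin n,
    ((pderiv (Sum.inl i)).toLinearMap : Module.End ℂ (PolA n)) ∘ₗ
      (pderiv (Sum.inr i)).toLinearMap

/-- `L^{(m)} = −(1/16)(ξ_m∘D − 2E'∘∂/∂u_m)∘D`. -/
noncomputable def Lop (n : ℕ) (m : Fin n) : Module.End ℂ (PolA n) :=
  (-(1 / 16 : ℂ)) •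
    (((LinearMap.mulLeft ℂ (X (Sum.inr m)) : Module.End ℂ (PolA n)) ∘ₗ Dlin n
        - (2 : ℂ) • (E'lin n ∘ₗ (pderiv (Sum.inl m)).toLinearMap)) ∘ₗ Dlin n)

end LO

namespace LO

abbrev U : Fin 1 ⊕ Fin 1 := Sum.inl 0
abbrev Z : Fin 1 ⊕ Fin 1 := Sum.inr 0

lemma coeff_cE {n : ℕ} (c : ℕ → ℂ) (φ : PolA n) (d : (Fin n ⊕ Fin n) →₀ ℕ) :
    coeff d (cE c φ) = c (xiDeg d) * coeff d φ := by
  classical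
  rw [cE, coeff_sum]
  simp only [coeff_monomial]
  rw [Finset.sum_ite_eq']
  split_ifs with h
  · rfl
  · rw [notMem_support_iff.mp h, mul_zero]

lemma xiDeg_one (d : (Fin 1 ⊕ Fin 1) →₀ ℕ) : xiDeg d = d Z := by
  simp [xiDeg]

lemma pU_cE (c : ℕ → ℂ) (φ : PolA 1) :
    pderiv U (cE c φ) = cE c (pderiv U φ) := by
  ext d
  simp [coeff_pderiv, coeff_cE, xiDeg_one, mul_assoc]

lemma pZ_cE (c : ℕ → ℂ) (φ : PolA 1) :
    pderiv Z (cE c φ) = cE (fun m => c (m + 1)) (pderiv Z φ) := by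
  ext d
  simp [coeff_pderiv, coeff_cE, xiDeg_one, mul_assoc]

lemma pUZ (φ : PolA 1) : pderiv Z (pderiv U φ) = pderiv U (pderiv Z φ) := by
  ext d
  simp [coeff_pderiv, add_right_comm]
  ring

lemma cE_cE (c e : ℕ → ℂ) (φ : PolA 1) : cE c (cE e φ) = cE (fun m => c m * e m) φ := by
  ext d
  simp [coeff_cE, mul_assoc]

lemma cE_zero (c : ℕ → ℂ) : cE c (0 : PolA 1) = 0 := by simp [cE]

lemma X_cE_pZ (c : ℕ → ℂ) (φ : PolA 1) :
    X Z * cE c (pderiv Z φ) = cE (fun m => m * c (m - 1)) φ := by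
  classical
  ext d
  rw [coeff_X_mul', coeff_cE, coeff_cE, coeff_pderiv, xiDeg_one, xiDeg_one]
  split_ifs with h
  · have h1 : d Z ≠ 0 := by simpa using h
    have h2 : d - Finsupp.single Z 1 + Finsupp.single Z 1 = d := by
      apply tsub_add_cancel_of_le
      rw [Finsupp.single_le_iff]; omega
    rw [h2]
    obtain ⟨k, hk⟩ := Nat.exists_eq_succ_of_ne_zero h1
    simp [hk]
    ring
  · have h1 : d Z = 0 := by simpa using h
    simp [h1]

lemma cE_one (φ : PolA 1) : cE (fun _ => 1) φ = φ := by
  ext d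
  simp [coeff_cE]

lemma pZ_X (φ : PolA 1) : pderiv Z (X Z * φ) = cE (fun m => (m : ℂ) + 1) φ := by
  have h := X_cE_pZ (fun _ => 1) φ
  rw [cE_one] at h
  rw [pderiv_mul, pderiv_X_self, one_mul, h]
  ext d
  simp [coeff_cE]
  ring

lemma pU_X (φ : PolA 1) : pderiv U (X Z * φ) = X Z * pderiv U φ := by
  rw [pderiv_mul, pderiv_X_of_ne (by simp)]
  simp

lemma Dop_one (φ : PolA 1) : Dop φ = pderiv U (pderiv Z φ) := by simp [Dop]

lemma Nop_zero (φ ψ : PolA 1) : Nop 0 φ ψ = φ * ψ := by simp [Nop]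

lemma Nop_one (φ ψ : PolA 1) : Nop 1 φ ψ = pderiv Z φ * pderiv U ψ := by
  simp [Nop]

lemma Nop_two (ψ : PolA 1) : Nop 2 (X Z) ψ = 0 := by
  have : ∀ i : Fin 1, pderiv (Sum.inr i) (1 : PolA 1) = 0 := fun i => pderiv_one
  simp [Nop, List.ofFn_succ]

lemma cE_h0 (φ : PolA 1) : cE (hScal 1 (1/2) 0) φ = φ := by
  ext d; simp [coeff_cE, hScal]

lemma cE_g0 (φ : PolA 1) : cE (gScal 1 (1/2) 0) φ = φ := by
  ext d; simp [coeff_cE, gScal]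

lemma ne1 (m : ℕ) : (2 * (m : ℂ) + 1) ≠ 0 := by exact_mod_cast (by omega : 2 * m + 1 ≠ 0)
lemma ne2 (m : ℕ) : ((m : ℂ) + 1) ≠ 0 := by exact_mod_cast (by omega : m + 1 ≠ 0)
lemma ne3 (m : ℕ) : (2 * (m : ℂ) + 3) ≠ 0 := by exact_mod_cast (by omega : 2 * m + 3 ≠ 0)
lemma ne4 (m : ℕ) : ((m : ℂ) + 2) ≠ 0 := by exact_mod_cast (by omega : m + 2 ≠ 0)

lemma g0 (m : ℕ) : gScal 1 (1/2) 0 m = 1 := by simp [gScal]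

lemma h1 (m : ℕ) : hScal 1 (1/2) 1 m = 1 / 2 := by
  have := ne2 m
  have e : (2 * (m : ℂ) + 1 + 1) = 2 * (m + 1) := by ring
  simp [hScal, e]
  field_simp
  ring

lemma g1 (m : ℕ) : gScal 1 (1/2) 1 m = -(1 / 2) := by
  have := ne2 m
  have e : (2 * (m : ℂ) + 1 + 1) = 2 * (m + 1) := by ring
  simp [gScal, e]
  field_simp
  ring

lemma h2 (m : ℕ) : hScal 1 (1/2) 2 m = (m + 1) / (4 * (2 * m + 3)) := by
  have a := ne2 m
  have b := ne3 m
  have c := ne4 m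
  have e : (2 * (m : ℂ) + 1 + 2) = 2 * m + 3 := by ring
  have f : (2 * (m : ℂ) + 1 + 1 + 2) = 2 * (m + 2) := by ring
  simp [hScal, Finset.prod_range_succ, e, f]
  field_simp
  ring

lemma g2 (m : ℕ) : gScal 1 (1/2) 2 m = (m + 2) / (4 * (2 * m + 3)) := by
  have a := ne2 m
  have b := ne3 m
  have c := ne4 m
  have e : (2 * (m : ℂ) + 1 + 1) = 2 * (m + 1) := by ring
  have f : (2 * (m : ℂ) + 1 + 1 + 1) = 2 * m + 3 := by ring
  simp only [gScal, Finset.prod_range_succ, Finset.prod_range_zero]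
  push_cast
  rw [f, add_zero, e]
  simp
  field_simp
  ring

lemma C_eq (ψ : PolA 1) : C 1 (1/2) 2 (X Z) ψ =
    bg (1/2) 0 (X Z * bh (1/2) 2 ψ) + bg (1/2) 1 (X Z * bh (1/2) 1 ψ)
    + bg (1/2) 2 (X Z * ψ) + bg (1/2) 0 (pderiv U (bh (1/2) 1 ψ))
    + bg (1/2) 1 (pderiv U ψ) := by
  have D1 : Dop (X Z : PolA 1) = 0 := by simp [Dop_one]
  have D0 : Dop (0 : PolA 1) = 0 := by simp [Dop_one]
  have b0 : ∀ φ : PolA 1, bh (1/2) 0 φ = φ := fun φ => by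
    rw [bh]; exact cE_h0 φ
  have b1 : bh (1/2) 1 (X Z : PolA 1) = 0 := by
    rw [bh, Function.iterate_one, D1, cE_zero]
  have b2 : bh (1/2) 2 (X Z : PolA 1) = 0 := by
    rw [bh, Function.iterate_succ_apply, Function.iterate_one, D1, D0, cE_zero]
  have N0 : ∀ k (φ : PolA 1), k < 3 → Nop k 0 φ = 0 := by
    intro k φ hk
    interval_cases k
    · simp [Nop_zero]
    · simp [Nop_one]
    · simp [Nop, List.ofFn_succ]
  have G0 : ∀ k, k < 3 → bg (1/2) k (0 : PolA 1) = 0 := by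
    intro k hk
    interval_cases k <;> simp [bg, cE_zero, D0]
  have n1 : ∀ φ : PolA 1, Nop 1 (X Z) φ = pderiv U φ := fun φ => by simp [Nop_one]
  simp only [C, Finset.sum_range_succ, Finset.sum_range_zero]
  norm_num only [if_true, if_false]
  norm_num [-one_div, b0, b1, b2, N0, G0, n1, Nop_two, Nop_zero]
  abel

lemma main (ψ : PolA 1) :
      cE (fun k => ((k : ℂ) + 1 / 2) * ((k : ℂ) + 1 / 2 + 1))
          (C 1 (1 / 2) 2 (X Z) ψ) =
        (1 / 16 : ℂ) • cE (fun k => (k : ℂ) + 1)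
            (pderiv U (pderiv U (pderiv Z ψ))) := by
  rw [C_eq]
  simp only [bg, bh, Function.iterate_succ_apply, Function.iterate_zero_apply, Dop_one,
    cE_g0, pZ_cE, pU_cE, pZ_X, pUZ, cE_cE]
  rw [← pUZ (pderiv Z ψ), ← pUZ (pderiv U (pderiv Z ψ)), X_cE_pZ]
  ext d
  simp only [coeff_cE, coeff_add, coeff_smul, smul_eq_mul, g0, h1, g1, h2, g2]
  generalize coeff d (pderiv U (pderiv U (pderiv Z ψ))) = t
  generalize xiDeg d = m
  have e1 := ne1 m
  have e3 := ne3 m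
  rcases m with _ | k
  · simp; ring
  · have e4 := ne3 k
    simp only [Nat.add_sub_cancel]
    push_cast at *
    have e5 : (2 * ((k : ℂ) + 1) + 3) = 2 * k + 5 := by ring
    rw [e5] at e3 ⊢
    clear e1 e5
    generalize (k : ℂ) = x at *
    obtain ⟨a, ha⟩ : ∃ a, a = (2 * x + 3)⁻¹ := ⟨_, rfl⟩
    obtain ⟨b, hb⟩ : ∃ b, b = (2 * x + 5)⁻¹ := ⟨_, rfl⟩
    have ha' : a * (2 * x + 3) = 1 := by rw [ha]; exact inv_mul_cancel₀ e4
    have hb' : b * (2 * x + 5) = 1 := by rw [hb]; exact inv_mul_cancel₀ e3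
    simp only [div_eq_mul_inv, mul_inv, ← ha, ← hb]
    grind

end LO

/-- for `n = 1`, `L^{(1)} = (1/16)(E' + 1/2) ∘ ∂³/(∂u₁²∂ξ₁)`;
equivalently `E'(E'+1)(C^{1/2}_2(ξ₁,ψ)) = (1/16)(E'+1/2)(∂³ψ/(∂u₁²∂ξ₁))`
(here `E'` acts on `A^k` by `k + 1/2`). -/
theorem stmt_17 :
    LO.Lop 1 0 =
      (1 / 16 : ℂ) • ((LO.E'lin 1 + (1 / 2 : ℂ) • 1) ∘ₗ
        ((pderiv (Sum.inl (0 : Fin 1))).toLinearMap ∘ₗ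
          (pderiv (Sum.inl (0 : Fin 1))).toLinearMap ∘ₗ
          (pderiv (Sum.inr (0 : Fin 1))).toLinearMap)) ∧
    ∀ ψ : PolA 1,
      LO.cE (fun k => ((k : ℂ) + 1 / 2) * ((k : ℂ) + 1 / 2 + 1))
          (LO.C 1 (1 / 2) 2 (X (Sum.inr 0)) ψ) =
        (1 / 16 : ℂ) •
          LO.cE (fun k => (k : ℂ) + 1)
            (pderiv (Sum.inl (0 : Fin 1))
              (pderiv (Sum.inl (0 : Fin 1)) (pderiv (Sum.inr (0 : Fin 1)) ψ))) := by
  refine ⟨?_, fun ψ => LO.main ψ⟩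
  refine LinearMap.ext fun ψ => ?_
  simp [LO.Lop, LO.E'lin, LO.Elin, LO.Dlin, LO.pUZ, -neg_smul]
  simp only [smul_add, smul_sub, smul_smul, neg_smul]
  module
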